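/- Let A ∈ ℝ^{N×N}, B ∈ ℝ^{N×M}, C ∈ ℝ^{M×N}, K ∈ ℝ^{M×N}, L ∈ ℝ^{N×M}, A_h ∈ ℝ^{n×n}, B_h ∈ ℝ^{n×m}, C_h ∈ ℝ^{m×n}. Suppose that for every complex eigenvalue λ of A − B K and for every complex eigenvalue λ of A − L C, every complex eigenvalue of A_h + λ·(B_h C_h) has negative real part. Then every complex eigenvalue of the 2Nn × 2Nn block matrix [[I_N ⊗ A_h + (A − B K) ⊗ (B_h C_h), (B K) ⊗ (B_h C_h)], [0, I_N ⊗ A_h + (A − L C) ⊗ (B_h C_h)]] has negative real part. -/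

import Mathlib

/-!
Over `ℂ`, the block triangular shape reduces the claim to the two diagonal blocks, each of the form
`T = 1 ⊗ P + S ⊗ Q`. Such a `T` commutes with `S ⊗ 1`, so every eigenspace of `T` contains a common
eigenvector `v` of `T` and `S ⊗ 1` (`exists_common_eigenvector`). If `(S ⊗ 1) v = l v`, then
`T = 1 ⊗ P + (1 ⊗ Q) (S ⊗ 1)` acts on `v` as `1 ⊗ (P + l Q)`. Reading `v` as a matrix, a nonzero
column of it is an eigenvector of `S` for `l`, and a nonzero row is an eigenvector of `P + l Q` for
the original eigenvalue of `T`. Hence the spectrum of `T` is covered by the spectra of `P + l Q`,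
with `l` in the spectrum of `S` (`exists_mem_spectrum_of_mem_spectrum_kronecker`); no
triangularization of `S` is needed.
-/

open Matrix Kronecker
section Helpers

lemma mem_spectrum_of_mulVec_eq {ι : Type*} [Fintype ι] [DecidableEq ι] {M : Matrix ι ι ℂ}
    {μ : ℂ} {v : ι → ℂ} (hv : v ≠ 0) (h : M *ᵥ v = μ • v) : μ ∈ spectrum ℂ M := by
  rw [← Matrix.spectrum_toLin', ← Module.End.hasEigenvalue_iff_mem_spectrum]
  exact Module.End.hasEigenvalue_of_hasEigenvector
    (Module.End.hasEigenvector_iff.2 ⟨Module.End.mem_eigenspace_iff.2 (by simpa using h), hv⟩)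

lemma exists_common_eigenvector {ι : Type*} [Fintype ι] [DecidableEq ι] {T U : Matrix ι ι ℂ}
    (hTU : Commute T U) {μ : ℂ} (hμ : μ ∈ spectrum ℂ T) :
    ∃ (l : ℂ) (v : ι → ℂ), v ≠ 0 ∧ T *ᵥ v = μ • v ∧ U *ᵥ v = l • v := by
  rw [← Matrix.spectrum_toLin', ← Module.End.hasEigenvalue_iff_mem_spectrum] at hμ
  have hmaps : ∀ x ∈ Module.End.eigenspace (Matrix.toLin' T) μ,
      Matrix.toLin' U x ∈ Module.End.eigenspace (Matrix.toLin' T) μ := by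
    intro x hx
    rw [Module.End.mem_eigenspace_iff, Matrix.toLin'_apply] at hx ⊢
    rw [Matrix.toLin'_apply, Matrix.mulVec_mulVec, hTU.eq, ← Matrix.mulVec_mulVec, hx,
      Matrix.mulVec_smul]
  have : Nontrivial (Module.End.eigenspace (Matrix.toLin' T) μ) :=
    (Submodule.nontrivial_iff_ne_bot).2 (Module.End.hasEigenvalue_iff.1 hμ)
  obtain ⟨l, hl⟩ := Module.End.exists_eigenvalue ((Matrix.toLin' U).restrict hmaps)
  obtain ⟨⟨v, hvT⟩, hv⟩ := hl.exists_hasEigenvector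
  refine ⟨l, v, fun h0 => hv.2 (Subtype.ext h0), ?_, ?_⟩
  · simpa using Module.End.mem_eigenspace_iff.1 hvT
  · simpa using congrArg Subtype.val hv.apply_eq_smul

lemma one_kronecker_mulVec_apply {ι κ : Type*} [Fintype ι] [Fintype κ] [DecidableEq ι]
    (M : Matrix κ κ ℂ) (v : ι × κ → ℂ) (i : ι) (j : κ) :
    (((1 : Matrix ι ι ℂ) ⊗ₖ M) *ᵥ v) (i, j) = (M *ᵥ fun j' => v (i, j')) j := by
  simp [Matrix.mulVec, dotProduct, Fintype.sum_prod_type, Matrix.one_apply, Finset.sum_ite_irrel]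

lemma kronecker_one_mulVec_apply {ι κ : Type*} [Fintype ι] [Fintype κ] [DecidableEq κ]
    (S : Matrix ι ι ℂ) (v : ι × κ → ℂ) (i : ι) (j : κ) :
    ((S ⊗ₖ (1 : Matrix κ κ ℂ)) *ᵥ v) (i, j) = (S *ᵥ fun i' => v (i', j)) i := by
  simp [Matrix.mulVec, dotProduct, Fintype.sum_prod_type, Matrix.one_apply]

/-- Every eigenvalue of `1 ⊗ P + S ⊗ Q` is an eigenvalue of `P + l Q` for some eigenvalue `l`
of `S`. -/
lemma exists_mem_spectrum_of_mem_spectrum_kronecker {ι κ : Type*} [Fintype ι] [Fintype κ]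
    [DecidableEq ι] [DecidableEq κ] (S : Matrix ι ι ℂ) (P Q : Matrix κ κ ℂ) {μ : ℂ}
    (hμ : μ ∈ spectrum ℂ ((1 : Matrix ι ι ℂ) ⊗ₖ P + S ⊗ₖ Q)) :
    ∃ l ∈ spectrum ℂ S, μ ∈ spectrum ℂ (P + l • Q) := by
  have hcomm : Commute ((1 : Matrix ι ι ℂ) ⊗ₖ P + S ⊗ₖ Q) (S ⊗ₖ (1 : Matrix κ κ ℂ)) := by
    simp [Commute, SemiconjBy, add_mul, mul_add, ← Matrix.mul_kronecker_mul]
  obtain ⟨l, v, hv, hT, hS⟩ := exists_common_eigenvector hcomm hμ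
  have hfac : S ⊗ₖ Q = ((1 : Matrix ι ι ℂ) ⊗ₖ Q) * (S ⊗ₖ (1 : Matrix κ κ ℂ)) := by
    simp [← Matrix.mul_kronecker_mul]
  have hPQ : ((1 : Matrix ι ι ℂ) ⊗ₖ (P + l • Q)) *ᵥ v = μ • v := by
    rw [← hT, hfac, Matrix.add_mulVec, ← Matrix.mulVec_mulVec, hS, Matrix.kronecker_add,
      Matrix.kronecker_smul, Matrix.add_mulVec, Matrix.smul_mulVec, Matrix.mulVec_smul]
  obtain ⟨⟨i₀, j₀⟩, hne⟩ := Function.ne_iff.1 hv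
  refine ⟨l, mem_spectrum_of_mulVec_eq (v := fun i => v (i, j₀)) ?_ ?_,
    mem_spectrum_of_mulVec_eq (v := fun j => v (i₀, j)) ?_ ?_⟩
  · exact fun h0 => hne (congrFun h0 i₀)
  · funext i
    rw [← kronecker_one_mulVec_apply, hS]
    rfl
  · exact fun h0 => hne (congrFun h0 j₀)
  · funext j
    rw [← one_kronecker_mulVec_apply, hPQ]
    rfl

lemma mem_spectrum_fromBlocks_zero₂₁ {ι κ : Type*} [Fintype ι] [Fintype κ]
    [DecidableEq ι] [DecidableEq κ] (X : Matrix ι ι ℂ) (Y : Matrix ι κ ℂ) (Z : Matrix κ κ ℂ)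
    {μ : ℂ} (hμ : μ ∈ spectrum ℂ (Matrix.fromBlocks X Y 0 Z)) :
    μ ∈ spectrum ℂ X ∨ μ ∈ spectrum ℂ Z := by
  rw [Matrix.mem_spectrum_iff_isRoot_charpoly, Matrix.charpoly_fromBlocks_zero₂₁,
    Polynomial.root_mul] at hμ
  simpa only [Matrix.mem_spectrum_iff_isRoot_charpoly] using hμ

lemma map_ofReal_one_kronecker_add {ι κ : Type*} [DecidableEq ι] (S : Matrix ι ι ℝ)
    (P Q : Matrix κ κ ℝ) :
    ((1 : Matrix ι ι ℝ) ⊗ₖ P + S ⊗ₖ Q).map Complex.ofReal =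
      (1 : Matrix ι ι ℂ) ⊗ₖ P.map Complex.ofReal
        + S.map Complex.ofReal ⊗ₖ Q.map Complex.ofReal := by
  ext ⟨i, j⟩ ⟨i', j'⟩
  simp [Matrix.one_apply, apply_ite Complex.ofReal]

end Helpers

/-- Proposition 4, separation principle: if every eigenvalue `λ` of
`A − B K` and every eigenvalue `λ` of `A − L C` is such that `A_h + λ • (B_h C_h)`
is Hurwitz, then the concatenated block upper triangular closed-loop/error matrix
is Hurwitz. -/
theorem stmt_6 (N M n m : ℕ)
    (A : Matrix (Fin N) (Fin N) ℝ)
    (B : Matrix (Fin N) (Fin M) ℝ)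
    (C : Matrix (Fin M) (Fin N) ℝ)
    (K : Matrix (Fin M) (Fin N) ℝ)
    (L : Matrix (Fin N) (Fin M) ℝ)
    (Ah : Matrix (Fin n) (Fin n) ℝ)
    (Bh : Matrix (Fin n) (Fin m) ℝ)
    (Ch : Matrix (Fin m) (Fin n) ℝ)
    (h : ∀ l : ℂ,
        (l ∈ spectrum ℂ ((A - B * K).map Complex.ofReal) ∨
          l ∈ spectrum ℂ ((A - L * C).map Complex.ofReal)) →
        ∀ μ ∈ spectrum ℂ (Ah.map Complex.ofReal + l • (Bh * Ch).map Complex.ofReal),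
          μ.re < 0) :
    ∀ μ ∈ spectrum ℂ
        ((Matrix.fromBlocks
            ((1 : Matrix (Fin N) (Fin N) ℝ) ⊗ₖ Ah + (A - B * K) ⊗ₖ (Bh * Ch))
            ((B * K) ⊗ₖ (Bh * Ch))
            0
            ((1 : Matrix (Fin N) (Fin N) ℝ) ⊗ₖ Ah + (A - L * C) ⊗ₖ (Bh * Ch))).map
          Complex.ofReal),
      μ.re < 0 := by
  intro μ hμ
  rw [Matrix.fromBlocks_map, Matrix.map_zero _ Complex.ofReal_zero,
    map_ofReal_one_kronecker_add, map_ofReal_one_kronecker_add] at hμ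
  rcases mem_spectrum_fromBlocks_zero₂₁ _ _ _ hμ with hμ | hμ <;>
    obtain ⟨l, hl, hl'⟩ := exists_mem_spectrum_of_mem_spectrum_kronecker _ _ _ hμ
  · exact h l (Or.inl hl) μ hl'
  · exact h l (Or.inr hl) μ hl'
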